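/- arXiv:1509.03699 — 2 statements merged into one kernel-verified Lean document; each statement's English description precedes it below -/
import Mathlib

section
/- For every real number x with 0 < x < 1, the function f(p) = max( 1/(p·x + (1 − p)), (1 + x)/(p·x + 1) ) attains its minimum over p ∈ [0, 1], and the minimum value equals 1 + x − x². -/
/-!
The first ratio increases with `p` and the second decreases, so their maximum is smallest where
the two graphs cross. Equating the ratios gives the linear equation
`p * x + 1 = (1 + x) * (p * x + (1 - p))`, whose solution is `p = x / (1 + x - x ^ 2)`.
-/

theorem isLeast_image_max_of_monotoneOn_of_antitoneOn {α β : Type*} [LinearOrder α]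
    [LinearOrder β] {f g : α → β} {s : Set α} {a : α} {b : β} (hf : MonotoneOn f s)
    (hg : AntitoneOn g s) (ha : a ∈ s) (hfa : f a = b) (hga : g a = b) :
    IsLeast ((fun p => max (f p) (g p)) '' s) b := by
  refine ⟨⟨a, ha, by simp only [hfa, hga, max_self]⟩, ?_⟩
  rintro _ ⟨p, hp, rfl⟩
  rcases le_total a p with hap | hpa
  · exact le_max_of_le_left (hfa ▸ hf ha hp hap)
  · exact le_max_of_le_right (hga ▸ hg hp ha hpa)

/-- The scheduling probability at which the two worst-case ratios of Random-Fit coincide, for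
profit ratio `x`. It is meaningful only when `1 + x - x ^ 2 ≠ 0`. -/
def balancingProb {K : Type*} [Field K] (x : K) : K :=
  x / (1 + x - x ^ 2)

section Field

variable {K : Type*} [Field K] {x : K}

theorem one_div_balancingProb_mul_add_one_sub (hc : 1 + x - x ^ 2 ≠ 0) :
    1 / (balancingProb x * x + (1 - balancingProb x)) = 1 + x - x ^ 2 := by
  have denom_eq : balancingProb x * x + (1 - balancingProb x) = 1 / (1 + x - x ^ 2) := by
    rw [balancingProb]
    field_simp
    ring
  rw [denom_eq, one_div_one_div]

theorem one_add_div_balancingProb_mul_add_one (hx : 1 + x ≠ 0) (hc : 1 + x - x ^ 2 ≠ 0) :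
    (1 + x) / (balancingProb x * x + 1) = 1 + x - x ^ 2 := by
  have denom_eq : balancingProb x * x + 1 = (1 + x) / (1 + x - x ^ 2) := by
    rw [balancingProb]
    field_simp
    ring
  rw [denom_eq, div_div_cancel₀ hx]

end Field

section LinearOrderedField

variable {K : Type*} [Field K] [LinearOrder K] [IsStrictOrderedRing K] {x : K}

theorem monotoneOn_one_div_mul_add_one_sub (hx0 : 0 < x) (hx1 : x ≤ 1) :
    MonotoneOn (fun p : K => 1 / (p * x + (1 - p))) (Set.Iic 1) := by
  intro p _ q (hq : q ≤ 1) hpq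
  have denom_pos : 0 < q * x + (1 - q) :=
    calc 0 < x := hx0
      _ ≤ x + (1 - q) * (1 - x) :=
        le_add_of_nonneg_right (mul_nonneg (sub_nonneg.2 hq) (sub_nonneg.2 hx1))
      _ = q * x + (1 - q) := by ring
  have denom_le : q * x + (1 - q) ≤ p * x + (1 - p) := by
    linarith [mul_le_mul_of_nonneg_right hpq (sub_nonneg.2 hx1)]
  exact one_div_le_one_div_of_le denom_pos denom_le

theorem antitoneOn_one_add_div_mul_add_one (hx : 0 ≤ x) :
    AntitoneOn (fun p : K => (1 + x) / (p * x + 1)) (Set.Ici 0) := by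
  intro p (hp : 0 ≤ p) q _ hpq
  dsimp only
  gcongr

theorem one_add_sub_sq_pos (hx0 : 0 ≤ x) (hx1 : x ≤ 1) : 0 < 1 + x - x ^ 2 :=
  calc 0 < 1 + x * (1 - x) :=
      add_pos_of_pos_of_nonneg one_pos (mul_nonneg hx0 (sub_nonneg.2 hx1))
    _ = 1 + x - x ^ 2 := by ring

theorem balancingProb_mem_Icc (hx0 : 0 ≤ x) (hx1 : x ≤ 1) :
    balancingProb x ∈ Set.Icc 0 1 := by
  have hc := one_add_sub_sq_pos hx0 hx1
  refine ⟨div_nonneg hx0 hc.le, (div_le_one hc).2 ?_⟩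
  linarith [pow_le_one₀ hx0 hx1 (n := 2)]

theorem stmt_0_general (hx0 : 0 < x) (hx1 : x ≤ 1) :
    IsLeast
      ((fun p : K => max (1 / (p * x + (1 - p))) ((1 + x) / (p * x + 1))) '' Set.Icc 0 1)
      (1 + x - x ^ 2) :=
  have hc : 1 + x - x ^ 2 ≠ 0 := (one_add_sub_sq_pos hx0.le hx1).ne'
  isLeast_image_max_of_monotoneOn_of_antitoneOn
    ((monotoneOn_one_div_mul_add_one_sub hx0 hx1).mono Set.Icc_subset_Iic_self)
    ((antitoneOn_one_add_div_mul_add_one hx0.le).mono Set.Icc_subset_Ici_self)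
    (balancingProb_mem_Icc hx0.le hx1)
    (one_div_balancingProb_mul_add_one_sub hc)
    (one_add_div_balancingProb_mul_add_one (by positivity) hc)

end LinearOrderedField

/-- For every real `x` with `0 < x < 1`, the function
`f(p) = max (1/(p*x + (1-p))) ((1+x)/(p*x + 1))` attains its minimum over `p ∈ [0,1]`,
and the minimum value equals `1 + x - x^2`. -/
theorem stmt_0 (x : ℝ) (hx0 : 0 < x) (hx1 : x < 1) :
    IsLeast
      ((fun p : ℝ => max (1 / (p * x + (1 - p))) ((1 + x) / (p * x + 1))) ''
        Set.Icc (0 : ℝ) 1)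
      (1 + x - x ^ 2) :=
  stmt_0_general hx0 hx1.le
end

section
/- For every real number x with 0 < x < 1 and every p ∈ [0, 1], one has max( 1/(p·x + (1 − p)), (1 + x)/(p·x + 1) ) ≥ 1 + x − x². -/
/-!
Both ratios are compared with `c = 1 + x - x ^ 2` by clearing denominators. The first is at least
`c` exactly when `x ≤ p * c`, the second exactly when `p * c ≤ x`; so they cross at height `c`, at
`p = x / c`, and for every `p` one of them is at least `c`.
-/

section

variable {K : Type*} [Field K] [LinearOrder K] [IsStrictOrderedRing K] {x p : K}

theorem one_add_sub_sq_le_one_div_iff (hx1 : x < 1) (hd : 0 < p * x + (1 - p)) :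
    1 + x - x ^ 2 ≤ 1 / (p * x + (1 - p)) ↔ x ≤ p * (1 + x - x ^ 2) := by
  have gap_eq : 1 - (1 + x - x ^ 2) * (p * x + (1 - p)) =
      (1 - x) * (p * (1 + x - x ^ 2) - x) := by ring
  rw [le_div_iff₀ hd, ← sub_nonneg, gap_eq, mul_nonneg_iff_of_pos_left (sub_pos.2 hx1), sub_nonneg]

theorem one_add_sub_sq_le_one_add_div_iff (hx0 : 0 < x) (hd : 0 < p * x + 1) :
    1 + x - x ^ 2 ≤ (1 + x) / (p * x + 1) ↔ p * (1 + x - x ^ 2) ≤ x := by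
  have gap_eq : 1 + x - (1 + x - x ^ 2) * (p * x + 1) =
      x * (x - p * (1 + x - x ^ 2)) := by ring
  rw [le_div_iff₀ hd, ← sub_nonneg, gap_eq, mul_nonneg_iff_of_pos_left hx0, sub_nonneg]

theorem stmt_2_general (hx0 : 0 < x) (hx1 : x < 1)
    (hd₁ : 0 < p * x + (1 - p)) (hd₂ : 0 < p * x + 1) :
    1 + x - x ^ 2 ≤ max (1 / (p * x + (1 - p))) ((1 + x) / (p * x + 1)) := by
  rw [le_max_iff, one_add_sub_sq_le_one_div_iff hx1 hd₁, one_add_sub_sq_le_one_add_div_iff hx0 hd₂]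
  exact le_total _ _

end

/-- For every real `x` with `0 < x < 1` and every `p ∈ [0,1]`,
`max (1/(p*x + (1-p))) ((1+x)/(p*x + 1)) ≥ 1 + x - x^2`. -/
theorem stmt_2 (x : ℝ) (hx0 : 0 < x) (hx1 : x < 1)
    (p : ℝ) (hp : p ∈ Set.Icc (0 : ℝ) 1) :
    1 + x - x ^ 2 ≤ max (1 / (p * x + (1 - p))) ((1 + x) / (p * x + 1)) := by
  obtain ⟨hp0, hp1⟩ := hp
  exact stmt_2_general hx0 hx1 (by nlinarith) (by positivity)
end
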